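/- L∞ error bound: let n ≥ 2, let 0 < r₁ < … < r_n, set h := max_{1≤j≤n−1}(r_{j+1} − r_j), let f ∈ Λ₀, set α := f(0) and ν_j := f(r_j) for 1 ≤ j ≤ n, and let σ be either the interpolant σ^A (with σ(r_j) = ν_j for all j and σ(0) = α) or σ^B (non-singular, with σ(r_j) = ν_j for all j). Then for l ∈ {0,1}: sup_{r ∈ [r₁,r_n]} |f^{(l)}(r) − σ^{(l)}(r)| ≤ (1/(2^{1−l}·√r₁))·h^{3/2−l}·‖f‖₀. -/

import Mathlib

open MeasureTheory Set Filter

noncomputable section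

/-- The radial Beppo Levi energy space `Λ₀`: functions `f : (0,∞) → ℂ` of class `C¹`
whose derivative `f′` is locally absolutely continuous on compact subintervals of `(0,∞)`
(encoded by the fundamental theorem of calculus with an integrable density `f″`),
and whose radial Beppo Levi energy `∫₀^∞ ( r·|f″(r)|² + (1/r)·|f′(r)|² ) dr` is finite. -/
structure Lambda0 where
  f : ℝ → ℂ
  f' : ℝ → ℂ
  f'' : ℝ → ℂ
  hasDeriv : ∀ r ∈ Set.Ioi (0:ℝ), HasDerivAt f (f' r) r
  contDeriv : ContinuousOn f' (Set.Ioi 0)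
  locAC : ∀ a b : ℝ, 0 < a → a ≤ b →
    MeasureTheory.IntegrableOn f'' (Set.Icc a b) ∧
      ∀ x ∈ Set.Icc a b, f' x = f' a + ∫ t in a..x, f'' t
  energyFin : MeasureTheory.IntegrableOn
    (fun r : ℝ => r * ‖f'' r‖ ^ 2 + (1 / r) * ‖f' r‖ ^ 2) (Set.Ioi 0)

/-- The squared radial Beppo Levi energy `‖·‖₀²` of a function with first derivative `g'`
and second derivative `g''`. -/
def energySq (g' g'' : ℝ → ℂ) : ℝ :=
  ∫ r in Set.Ioi (0:ℝ), (r * ‖g'' r‖ ^ 2 + (1 / r) * ‖g' r‖ ^ 2)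

/-- The seminorm `‖f‖₀`. -/
def Lambda0.seminorm0 (F : Lambda0) : ℝ :=
  Real.sqrt (energySq F.f' F.f'')

/-- The semi-inner product `⟨f,g⟩₀`. -/
def innerBL (F G : Lambda0) : ℂ :=
  ∫ r in Set.Ioi (0:ℝ),
    ((r : ℂ) * F.f'' r * (starRingEnd ℂ) (G.f'' r) +
      (1 / (r : ℂ)) * F.f' r * (starRingEnd ℂ) (G.f' r))

/-- A Beppo Levi `L₀`-spline on the positive knots `r 1 < r 2 < … < r n`:
piecewise of the form `a·x² + b·x²·ln x + c + d·ln x` between consecutive knots,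
of the form `a·x² + b·x²·ln x + c` on `(0, r 1)`, of the form `c + d·ln x` on `(r n, ∞)`,
`C²` throughout `(0,∞)`, and continuously extended at `0`. -/
structure IsBLSpline (n : ℕ) (r : ℕ → ℝ) (η : ℝ → ℂ) : Prop where
  pieces : ∀ j : ℕ, 1 ≤ j → j + 1 ≤ n → ∃ a b c d : ℂ,
    ∀ x ∈ Set.Ioo (r j) (r (j + 1)),
      η x = a * (x : ℂ) ^ 2 + b * (x : ℂ) ^ 2 * (Real.log x : ℂ) + c + d * (Real.log x : ℂ)
  left : ∃ a b c : ℂ, ∀ x ∈ Set.Ioo (0 : ℝ) (r 1),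
      η x = a * (x : ℂ) ^ 2 + b * (x : ℂ) ^ 2 * (Real.log x : ℂ) + c
  right : ∃ c d : ℂ, ∀ x ∈ Set.Ioi (r n), η x = c + d * (Real.log x : ℂ)
  smooth : ContDiffOn ℝ 2 η (Set.Ioi 0)
  cont0 : ContinuousWithinAt η (Set.Ici 0) 0

/-- A Beppo Levi `L₀`-spline is non-singular if on `(0, r₁)` it has the form `a·x² + c`. -/
def NonSingularBLS (r1 : ℝ) (η : ℝ → ℂ) : Prop :=
  ∃ a c : ℂ, ∀ x ∈ Set.Ioo (0 : ℝ) r1, η x = a * (x : ℂ) ^ 2 + c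

/-- Rabut's kernel `K`. -/
def Kfun (r t : ℝ) : ℝ :=
  if r ≤ t then 0 else (1 / 4) * (t ^ 2 - r ^ 2 + (r ^ 2 + t ^ 2) * Real.log (r / t))

/-- The limiting kernel `H_{0,∞}` (with left endpoint knot `r1`). -/
def Hfun (r1 r t : ℝ) : ℝ :=
  Kfun r t - Kfun r r1 - Kfun r1 t + (1 / 4) * (r ^ 2 - r1 ^ 2) * Real.log (t / r1)

/-- The basis function `φ₀`. -/
def phi0 (r : ℝ) : ℝ :=
  if r ≤ 1 then r ^ 2 - r ^ 2 * Real.log r else 1 + Real.log r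

/-- Johnson's compactly supported profile `η₂`. -/
def eta2 (x : ℝ) : ℂ :=
  (((4 / 3 : ℝ) * (Real.log 2 - phi0 x + phi0 (x / 2)) : ℝ) : ℂ)

/-- The non-singular compactly supported profile `β`. -/
def betaFn (x : ℝ) : ℂ :=
  (((1 / 5 : ℝ) * (27 * Real.log 3 - 32 * Real.log 2 + 5 * phi0 x
      - 32 * phi0 (x / 2) + 27 * phi0 (x / 3)) : ℝ) : ℂ)

/-- `Ker L₀ = span{r², r² ln r, 1, ln r}`, as functions on `(0,∞)`. -/
def KerL0 : Set (ℝ → ℂ) :=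
  {η | ∃ a b c d : ℂ, ∀ x : ℝ, 0 < x →
    η x = a * (x : ℂ) ^ 2 + b * (x : ℂ) ^ 2 * (Real.log x : ℂ) + c + d * (Real.log x : ℂ)}

/-- `α(h) = inf_{η ∈ Ker L₀} sup_{t ∈ [0,1]} |t^μ − η(1+th)|`. -/
def alphaFn (μ h : ℝ) : ℝ :=
  sInf {v : ℝ | ∃ η ∈ KerL0,
    v = sSup ((fun t : ℝ => ‖((t ^ μ : ℝ) : ℂ) - η (1 + t * h)‖) '' Set.Icc (0 : ℝ) 1)}

lemma parts_real (u v u' v' : ℝ → ℝ) (c d : ℝ)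
    (hcd : c ≤ d)
    (hu' : IntervalIntegrable u' volume c d) (hv' : IntervalIntegrable v' volume c d)
    (hu : ∀ x ∈ Icc c d, u x = u c + ∫ t in c..x, u' t)
    (hv : ∀ x ∈ Icc c d, v x = v c + ∫ t in c..x, v' t) :
    ∫ x in c..d, (u' x * v x + u x * v' x) = u d * v d - u c * v c := by
  set U : ℝ → ℝ := fun x => u c + ∫ t in c..x, u' t with hU
  set V : ℝ → ℝ := fun x => v c + ∫ t in c..x, v' t with hV
  have cac : ∀ k : ℝ, AbsolutelyContinuousOnInterval (fun _ : ℝ => k) c d := fun k =>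
    (contDiffOn_const (n := 1)).absolutelyContinuousOnInterval
  have hUac : AbsolutelyContinuousOnInterval U c d :=
    (cac _).add (hu'.absolutelyContinuousOnInterval_intervalIntegral (c := c) (by simp))
  have hVac : AbsolutelyContinuousOnInterval V c d :=
    (cac _).add (hv'.absolutelyContinuousOnInterval_intervalIntegral (c := c) (by simp))
  have key := hUac.integral_deriv_mul_eq_sub hVac
  rw [hu d (by simp [hcd]), hv d (by simp [hcd])]
  have e1 : U c = u c := by simp [hU]
  have e2 : V c = v c := by simp [hV]
  rw [e1, e2] at key
  rw [← key]
  apply intervalIntegral.integral_congr_ae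
  filter_upwards [hu'.ae_hasDerivAt_integral, hv'.ae_hasDerivAt_integral] with x h1 h2 hx
  have hx' : x ∈ uIcc c d := uIoc_subset_uIcc hx
  have d1 : HasDerivAt U (u' x) x := (h1 hx' c (by simp)).const_add _
  have d2 : HasDerivAt V (v' x) x := (h2 hx' c (by simp)).const_add _
  rw [uIcc_of_le hcd] at hx'
  rw [d1.deriv, d2.deriv, hu x hx', hv x hx']

def ipc (z w : ℂ) : ℝ := z.re * w.re + z.im * w.im

lemma ipc_le (z w : ℂ) : |ipc z w| ≤ ‖z‖ * ‖w‖ := by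
  have : ipc z w = ((starRingEnd ℂ) z * w).re := by simp [ipc]
  rw [this]
  refine (Complex.abs_re_le_norm _).trans ?_
  simp

lemma re_int {g : ℝ → ℂ} {a b : ℝ} (hg : IntervalIntegrable g volume a b) :
    (∫ t in a..b, g t).re = ∫ t in a..b, (g t).re := by
  have := Complex.reCLM.intervalIntegral_comp_comm hg
  simpa using this.symm

lemma im_int {g : ℝ → ℂ} {a b : ℝ} (hg : IntervalIntegrable g volume a b) :
    (∫ t in a..b, g t).im = ∫ t in a..b, (g t).im := by
  have := Complex.imCLM.intervalIntegral_comp_comm hg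
  simpa using this.symm

lemma ii_re {g : ℝ → ℂ} {a b : ℝ} (hg : IntervalIntegrable g volume a b) :
    IntervalIntegrable (fun t => (g t).re) volume a b :=
  ⟨hg.1.re, hg.2.re⟩

lemma ii_im {g : ℝ → ℂ} {a b : ℝ} (hg : IntervalIntegrable g volume a b) :
    IntervalIntegrable (fun t => (g t).im) volume a b :=
  ⟨hg.1.im, hg.2.im⟩

lemma sub_ii {g : ℝ → ℂ} {c d x : ℝ} (hg : IntervalIntegrable g volume c d) (hx : x ∈ Icc c d) :
    IntervalIntegrable g volume c x := by
  apply hg.mono_set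
  rw [uIcc_of_le hx.1, uIcc_of_le (hx.1.trans hx.2)]
  exact Icc_subset_Icc_right hx.2

lemma ii_ipc {u v : ℝ → ℂ} {c d : ℝ} (hu : ContinuousOn u (uIcc c d))
    (hv : IntervalIntegrable v volume c d) :
    IntervalIntegrable (fun x => ipc (u x) (v x)) volume c d := by
  unfold ipc
  exact ((ii_re hv).continuousOn_mul (Complex.continuous_re.comp_continuousOn hu)).add
   ((ii_im hv).continuousOn_mul (Complex.continuous_im.comp_continuousOn hu))

lemma prim_cont {u u' : ℝ → ℂ} {c d : ℝ} (hcd : c ≤ d)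
    (hu' : IntervalIntegrable u' volume c d)
    (hu : ∀ x ∈ Icc c d, u x = u c + ∫ t in c..x, u' t) : ContinuousOn u (uIcc c d) := by
  have := intervalIntegral.continuousOn_primitive_interval (μ := volume) (f := u') (a := c) (b := d)
    (by rw [uIcc_of_le hcd]; exact (intervalIntegrable_iff_integrableOn_Icc_of_le hcd).1 hu')
  refine (continuousOn_const.add this).congr (f := fun x => u c + ∫ t in c..x, u' t) ?_
  intro x hx
  rw [uIcc_of_le hcd] at hx
  exact hu x hx

lemma parts_cplx (u v u' v' : ℝ → ℂ) (c d : ℝ)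
    (hcd : c ≤ d)
    (hu' : IntervalIntegrable u' volume c d) (hv' : IntervalIntegrable v' volume c d)
    (hu : ∀ x ∈ Icc c d, u x = u c + ∫ t in c..x, u' t)
    (hv : ∀ x ∈ Icc c d, v x = v c + ∫ t in c..x, v' t) :
    ∫ x in c..d, (ipc (v x) (u' x) + ipc (u x) (v' x)) = ipc (u d) (v d) - ipc (u c) (v c) := by
  have uc := prim_cont hcd hu' hu
  have vc := prim_cont hcd hv' hv
  have A := parts_real (fun x => (u x).re) (fun x => (v x).re) (fun x => (u' x).re)
    (fun x => (v' x).re) c d hcd (ii_re hu') (ii_re hv')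
    (fun x hx => by rw [← re_int (sub_ii hu' hx), hu x hx]; simp)
    (fun x hx => by rw [← re_int (sub_ii hv' hx), hv x hx]; simp)
  have B := parts_real (fun x => (u x).im) (fun x => (v x).im) (fun x => (u' x).im)
    (fun x => (v' x).im) c d hcd (ii_im hu') (ii_im hv')
    (fun x hx => by rw [← im_int (sub_ii hu' hx), hu x hx]; simp)
    (fun x hx => by rw [← im_int (sub_ii hv' hx), hv x hx]; simp)
  have I1 : IntervalIntegrable (fun x => (u' x).re * (v x).re + (u x).re * (v' x).re) volume c d :=
    ((ii_re hu').mul_continuousOn (Complex.continuous_re.comp_continuousOn vc)).add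
    ((ii_re hv').continuousOn_mul (Complex.continuous_re.comp_continuousOn uc))
  have I2 : IntervalIntegrable (fun x => (u' x).im * (v x).im + (u x).im * (v' x).im) volume c d :=
    ((ii_im hu').mul_continuousOn (Complex.continuous_im.comp_continuousOn vc)).add
    ((ii_im hv').continuousOn_mul (Complex.continuous_im.comp_continuousOn uc))
  have C := intervalIntegral.integral_add I1 I2
  rw [A, B] at C
  rw [show ipc (u d) (v d) - ipc (u c) (v c) = (u d).re * (v d).re - (u c).re * (v c).re
    + ((u d).im * (v d).im - (u c).im * (v c).im) by unfold ipc; ring, ← C]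
  congr 1
  ext x
  unfold ipc; ring

lemma Lambda0.ii (F : Lambda0) {c d : ℝ} (hc : 0 < c) (hcd : c ≤ d) :
    IntervalIntegrable F.f'' volume c d :=
  (intervalIntegrable_iff_integrableOn_Icc_of_le hcd).2 (F.locAC c d hc hcd).1

lemma smooth_facts (S : Lambda0) (hS : ContDiffOn ℝ 2 S.f (Ioi 0)) :
    (∀ x, 0 < x → HasDerivAt S.f' (deriv S.f' x) x) ∧ ContinuousOn (deriv S.f') (Ioi 0) := by
  have h1 : ContDiffOn ℝ 1 (deriv S.f) (Ioi 0) :=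
    ((contDiffOn_succ_iff_deriv_of_isOpen (n := 1) isOpen_Ioi).1 (by rw [one_add_one_eq_two]; exact hS)).2.2
  have h2 : ContDiffOn ℝ 1 S.f' (Ioi 0) :=
    h1.congr (fun x hx => (S.hasDeriv x hx).deriv.symm)
  have h3 := (contDiffOn_succ_iff_deriv_of_isOpen (n := 0) isOpen_Ioi).1 (by simpa using h2)
  refine ⟨fun x hx => (h3.1.differentiableAt (Ioi_mem_nhds hx)).hasDerivAt, h3.2.2.continuousOn⟩

lemma snd_ae (S : Lambda0) {c d : ℝ} (hc : 0 < c) (hcd : c ≤ d) :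
    ∀ᵐ x, x ∈ Icc c d → S.f'' x = deriv S.f' x := by
  have n1 : ∀ᵐ x : ℝ, x ≠ c := by simp [ae_iff, measure_singleton]
  have n2 : ∀ᵐ x : ℝ, x ≠ d := by simp [ae_iff, measure_singleton]
  filter_upwards [(S.ii hc hcd).ae_hasDerivAt_integral, n1, n2] with x h1 h2 h3 hx
  have hx' : x ∈ Ioo c d := ⟨lt_of_le_of_ne hx.1 (Ne.symm h2), lt_of_le_of_ne hx.2 h3⟩
  have D := (h1 (by rwa [uIcc_of_le hcd]) c (by simp)).const_add (S.f' c)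
  have : S.f' =ᶠ[nhds x] fun x => S.f' c + ∫ t in c..x, S.f'' t := by
    filter_upwards [Ioo_mem_nhds hx'.1 hx'.2] with y hy
    exact (S.locAC c d hc hcd).2 y ⟨hy.1.le, hy.2.le⟩
  exact (D.congr_of_eventuallyEq this).deriv.symm

lemma piece_facts (S : Lambda0) {c d : ℝ} (hc : 0 ≤ c) (a b k e : ℂ)
    (hf : ∀ x ∈ Ioo c d, S.f x = a * (x : ℂ) ^ 2 + b * (x : ℂ) ^ 2 * (Real.log x : ℂ) + k
      + e * (Real.log x : ℂ)) :
    ∀ x ∈ Ioo c d, (x : ℂ) * deriv S.f' x = 2 * a * x + b * (2 * (x * Real.log x) + 3 * x) - e / x ∧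
      HasDerivAt (fun x : ℝ => (x : ℂ) * deriv S.f' x) (S.f' x / x + 4 * b) x := by
  have key1 : ∀ x ∈ Ioo c d, S.f' x = 2 * a * x + b * (2 * (x * Real.log x) + x) + e / x := by
    intro x hx
    have x0 : 0 < x := hc.trans_lt hx.1
    have xc : (x : ℂ) ≠ 0 := by exact_mod_cast x0.ne'
    have hl : HasDerivAt (fun x : ℝ => (Real.log x : ℂ)) ((x⁻¹ : ℝ) : ℂ) x :=
      (Real.hasDerivAt_log x0.ne').ofReal_comp
    have hi : HasDerivAt (fun x : ℝ => (x : ℂ)) 1 x := by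
      simpa using (hasDerivAt_id x).ofReal_comp
    have := ((((hi.pow 2).const_mul a).add (((hi.pow 2).const_mul b).mul hl)).add_const k).add
      (hl.const_mul e)
    have h2 := (this.congr_of_eventuallyEq (f₁ := S.f) (by
      filter_upwards [Ioo_mem_nhds hx.1 hx.2] with y hy
      rw [hf y hy]; simp))
    rw [(S.hasDeriv x x0).unique h2]
    simp only [Pi.pow_apply]
    push_cast
    field_simp
  have key2 : ∀ x ∈ Ioo c d, deriv S.f' x = 2 * a + b * (2 * Real.log x + 3) - e / x ^ 2 := by
    intro x hx
    have x0 : 0 < x := hc.trans_lt hx.1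
    have xc : (x : ℂ) ≠ 0 := by exact_mod_cast x0.ne'
    have hl : HasDerivAt (fun x : ℝ => (Real.log x : ℂ)) ((x⁻¹ : ℝ) : ℂ) x :=
      (Real.hasDerivAt_log x0.ne').ofReal_comp
    have hi : HasDerivAt (fun x : ℝ => (x : ℂ)) 1 x := by
      simpa using (hasDerivAt_id x).ofReal_comp
    have := ((hi.const_mul (2 * a)).add ((((hi.mul hl).const_mul 2).add hi).const_mul b)).add
      ((hi.inv xc).const_mul e)
    have h2 := (this.congr_of_eventuallyEq (f₁ := S.f') (by
      filter_upwards [Ioo_mem_nhds hx.1 hx.2] with y hy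
      rw [key1 y hy]; simp [div_eq_mul_inv]))
    rw [h2.deriv]
    push_cast
    field_simp
    ring
  have key3 : ∀ x ∈ Ioo c d, (x : ℂ) * deriv S.f' x
      = 2 * a * x + b * (2 * (x * Real.log x) + 3 * x) - e / x := by
    intro x hx
    have x0 : 0 < x := hc.trans_lt hx.1
    have xc : (x : ℂ) ≠ 0 := by exact_mod_cast x0.ne'
    rw [key2 x hx]
    field_simp
  intro x hx
  refine ⟨key3 x hx, ?_⟩
  have x0 : 0 < x := hc.trans_lt hx.1
  have xc : (x : ℂ) ≠ 0 := by exact_mod_cast x0.ne'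
  have hl : HasDerivAt (fun x : ℝ => (Real.log x : ℂ)) ((x⁻¹ : ℝ) : ℂ) x :=
    (Real.hasDerivAt_log x0.ne').ofReal_comp
  have hi : HasDerivAt (fun x : ℝ => (x : ℂ)) 1 x := by
    simpa using (hasDerivAt_id x).ofReal_comp
  have := ((hi.const_mul (2 * a)).add ((((hi.mul hl).const_mul 2).add (hi.const_mul 3)).const_mul
    b)).sub ((hi.inv xc).const_mul e)
  have h2 := (this.congr_of_eventuallyEq (f₁ := fun x : ℝ => (x : ℂ) * deriv S.f' x) (by
    filter_upwards [Ioo_mem_nhds hx.1 hx.2] with y hy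
    rw [key3 y hy]; simp [div_eq_mul_inv]))
  refine h2.congr_deriv ?_
  rw [key1 x hx]
  push_cast
  field_simp
  ring

def wfn (F S : Lambda0) (x : ℝ) : ℝ :=
  ipc ((x : ℂ) * deriv S.f' x) (F.f'' x - S.f'' x) + ipc (F.f' x - S.f' x) (S.f' x / x)

def bfn (F S : Lambda0) (x : ℝ) : ℝ := ipc ((x : ℂ) * deriv S.f' x) (F.f' x - S.f' x)

lemma Icc_sub_pos {c d : ℝ} (hc : 0 < c) (hcd : c ≤ d) : uIcc c d ⊆ Ioi 0 := by
  rw [uIcc_of_le hcd]; intro x hx; exact hc.trans_le hx.1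

lemma w_ii (F S : Lambda0) (hS : ContDiffOn ℝ 2 S.f (Ioi 0)) {c d : ℝ} (hc : 0 < c)
    (hcd : c ≤ d) : IntervalIntegrable (wfn F S) volume c d := by
  have hsub := Icc_sub_pos hc hcd
  have hq := (smooth_facts S hS).2.mono hsub
  have cx : ContinuousOn (fun x : ℝ => (x : ℂ)) (uIcc c d) := Complex.continuous_ofReal.continuousOn
  have cs := S.contDeriv.mono hsub
  have cf := F.contDeriv.mono hsub
  have cdiv : ContinuousOn (fun x : ℝ => S.f' x / x) (uIcc c d) :=
    cs.div cx (fun x hx => by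
      have : 0 < x := hsub hx
      exact_mod_cast this.ne')
  exact (ii_ipc (cx.mul hq) ((F.ii hc hcd).sub (S.ii hc hcd))).add
    (ii_ipc (cf.sub cs) cdiv.intervalIntegrable)

lemma piece_int (F S : Lambda0) (hS : ContDiffOn ℝ 2 S.f (Ioi 0)) {c d : ℝ} (hc : 0 < c)
    (hcd : c ≤ d) (a b k e : ℂ)
    (hf : ∀ x ∈ Ioo c d, S.f x = a * (x : ℂ) ^ 2 + b * (x : ℂ) ^ 2 * (Real.log x : ℂ) + k
      + e * (Real.log x : ℂ)) :
    ∫ x in c..d, wfn F S x = bfn F S d - bfn F S c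
      - 4 * ipc b ((F.f d - S.f d) - (F.f c - S.f c)) := by
  have hsub := Icc_sub_pos hc hcd
  have hq := (smooth_facts S hS).2.mono hsub
  have cx : ContinuousOn (fun x : ℝ => (x : ℂ)) (uIcc c d) := Complex.continuous_ofReal.continuousOn
  have cs := S.contDeriv.mono hsub
  have cf := F.contDeriv.mono hsub
  have cdiv : ContinuousOn (fun x : ℝ => S.f' x / x) (uIcc c d) :=
    cs.div cx (fun x hx => by
      have : 0 < x := hsub hx
      exact_mod_cast this.ne')
  have hpf := piece_facts S hc.le a b k e hf
  have cu : ContinuousOn (fun x : ℝ => S.f' x / x + 4 * b) (uIcc c d) := cdiv.add continuousOn_const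
  have P := parts_cplx (fun x => (x : ℂ) * deriv S.f' x) (fun x => F.f' x - S.f' x)
    (fun x => S.f' x / x + 4 * b) (fun x => F.f'' x - S.f'' x) c d hcd cu.intervalIntegrable
    ((F.ii hc hcd).sub (S.ii hc hcd))
    (fun x hx => by
      have cxx : ContinuousOn (fun x : ℝ => (x : ℂ) * deriv S.f' x) (Icc c x) := by
        refine (cx.mul hq).mono ?_
        rw [uIcc_of_le hcd]; exact Icc_subset_Icc_right hx.2
      have := intervalIntegral.integral_eq_sub_of_hasDerivAt_of_le hx.1 cxx
        (fun y hy => (hpf y ⟨hy.1, hy.2.trans_le hx.2⟩).2) (sub_ii cu.intervalIntegrable hx)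
      rw [this]; ring)
    (fun x hx => by
      rw [intervalIntegral.integral_sub (sub_ii (F.ii hc hcd) hx) (sub_ii (S.ii hc hcd) hx),
        (F.locAC c d hc hcd).2 x hx, (S.locAC c d hc hcd).2 x hx]
      ring)
  have gi : ∀ x ∈ uIcc c d, HasDerivAt (fun x => ipc b (F.f x - S.f x))
      (ipc b (F.f' x - S.f' x)) x := by
    intro x hx
    have D := (F.hasDeriv x (hsub hx)).sub (S.hasDeriv x (hsub hx))
    have D1 := (Complex.reCLM.hasFDerivAt.comp_hasDerivAt x D)
    have D2 := (Complex.imCLM.hasFDerivAt.comp_hasDerivAt x D)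
    exact (D1.const_mul b.re).add (D2.const_mul b.im)
  have ci : IntervalIntegrable (fun x => ipc b (F.f' x - S.f' x)) volume c d :=
    ii_ipc continuousOn_const (cf.sub cs).intervalIntegrable
  have Q := intervalIntegral.integral_eq_sub_of_hasDerivAt gi ci
  have R := intervalIntegral.integral_add (w_ii F S hS hc hcd) (ci.const_mul 4)
  rw [intervalIntegral.integral_const_mul, Q] at R
  have E : (fun x => wfn F S x + 4 * ipc b (F.f' x - S.f' x)) = fun x =>
    (ipc (F.f' x - S.f' x) (S.f' x / x + 4 * b) + ipc ((x : ℂ) * deriv S.f' x)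
      (F.f'' x - S.f'' x)) := by
    ext x
    simp only [wfn, ipc, Complex.add_re, Complex.add_im, Complex.mul_re, Complex.mul_im]
    norm_num
    ring
  rw [E, P] at R
  simp only [bfn]
  have : ipc b ((F.f d - S.f d) - (F.f c - S.f c)) = ipc b (F.f d - S.f d) - ipc b (F.f c - S.f c) := by
    simp only [ipc, Complex.sub_re, Complex.sub_im]; ring
  rw [this]
  linarith

def efn (F : Lambda0) (r : ℝ) : ℝ := r * ‖F.f'' r‖ ^ 2 + (1 / r) * ‖F.f' r‖ ^ 2

lemma efn_nonneg (F : Lambda0) {x : ℝ} (hx : 0 < x) : 0 ≤ efn F x := by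
  unfold efn; positivity

lemma efn_ii (F : Lambda0) {c d : ℝ} (hc : 0 < c) (hcd : c ≤ d) :
    IntervalIntegrable (efn F) volume c d := by
  rw [intervalIntegrable_iff_integrableOn_Icc_of_le hcd]
  exact F.energyFin.mono_set (fun x hx => hc.trans_le hx.1)

lemma efn_le (F : Lambda0) {c d : ℝ} (hc : 0 < c) (hcd : c ≤ d) :
    ∫ x in c..d, efn F x ≤ energySq F.f' F.f'' := by
  rw [intervalIntegral.integral_of_le hcd]
  refine setIntegral_mono_set F.energyFin ?_ ?_
  · filter_upwards [ae_restrict_mem measurableSet_Ioi] with x hx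
    exact efn_nonneg F hx
  · exact LE.le.eventuallyLE (fun x hx => hc.trans hx.1)

lemma growth_aux (F : Lambda0) {a b : ℝ} (ha : 0 < a) (hab : a ≤ b) :
    ‖F.f' b - F.f' a‖ ≤ |Real.log b - Real.log a| + energySq F.f' F.f'' := by
  have h0 : (0 : ℝ) ∉ uIcc a b := fun h => by
    have : (0:ℝ) < 0 := Icc_sub_pos ha hab h
    exact lt_irrefl _ this
  rw [(F.locAC a b ha hab).2 b ⟨hab, le_rfl⟩, add_sub_cancel_left]
  refine (intervalIntegral.norm_integral_le_integral_norm hab).trans ?_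
  have i1 : IntervalIntegrable (fun x : ℝ => x⁻¹) volume a b :=
    intervalIntegral.intervalIntegrable_inv (fun x hx => (Icc_sub_pos ha hab hx).ne') continuousOn_id
  have : ∫ t in a..b, ‖F.f'' t‖ ≤ ∫ t in a..b, (t⁻¹ + efn F t) := by
    refine intervalIntegral.integral_mono_on hab (F.ii ha hab).norm (i1.add (efn_ii F ha hab)) ?_
    intro t ht
    have t0 : 0 < t := ha.trans_le ht.1
    have p1 : 0 ≤ (1 / t) * ‖F.f' t‖ ^ 2 := by positivity
    have p2 : ‖F.f'' t‖ ≤ t⁻¹ + t * ‖F.f'' t‖ ^ 2 := by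
      have := sq_nonneg (t * ‖F.f'' t‖ - 1)
      have p3 := norm_nonneg (F.f'' t)
      have : t⁻¹ + t * ‖F.f'' t‖ ^ 2 - ‖F.f'' t‖
        = t⁻¹ * ((t * ‖F.f'' t‖ - 1) ^ 2 + t * ‖F.f'' t‖) := by field_simp; ring
      have : 0 ≤ t⁻¹ * ((t * ‖F.f'' t‖ - 1) ^ 2 + t * ‖F.f'' t‖) := by positivity
      linarith
    unfold efn; linarith
  refine this.trans ?_
  rw [intervalIntegral.integral_add i1 (efn_ii F ha hab), integral_inv h0,
    Real.log_div (ha.trans_le hab).ne' ha.ne']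
  exact add_le_add (le_abs_self _) (efn_le F ha hab)

lemma growth (F : Lambda0) : ∃ C, 0 ≤ C ∧ ∀ x, 0 < x → ‖F.f' x‖ ≤ C + |Real.log x| := by
  have E0 : 0 ≤ energySq F.f' F.f'' := by
    refine le_trans ?_ (efn_le F one_pos le_rfl); simp
  refine ⟨‖F.f' 1‖ + energySq F.f' F.f'', by positivity, fun x hx => ?_⟩
  rcases le_total 1 x with h | h
  · have := growth_aux F one_pos h
    rw [Real.log_one, sub_zero] at this
    have := norm_sub_norm_le (F.f' x) (F.f' 1)
    linarith
  · have := growth_aux F hx h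
    rw [Real.log_one, zero_sub, abs_neg, norm_sub_rev] at this
    have := norm_sub_norm_le (F.f' x) (F.f' 1)
    linarith

def dfn (F S : Lambda0) (x : ℝ) : ℝ := efn F x - 2 * wfn F S x

lemma d_ge (F S : Lambda0) {x : ℝ} (hx : 0 < x) (hs : S.f'' x = deriv S.f' x) :
    x * ‖F.f'' x - S.f'' x‖ ^ 2 ≤ dfn F S x := by
  have hx' := hx.ne'
  have key : dfn F S x - x * ‖F.f'' x - S.f'' x‖ ^ 2
    = (1 / x) * ‖F.f' x - S.f' x‖ ^ 2 + (1 / x) * ‖S.f' x‖ ^ 2 + x * ‖S.f'' x‖ ^ 2 := by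
    simp only [dfn, efn, wfn, ← hs, ipc, ← Complex.normSq_eq_norm_sq, Complex.normSq_apply,
      Complex.sub_re, Complex.sub_im, Complex.div_ofReal_re, Complex.div_ofReal_im,
      Complex.re_ofReal_mul, Complex.im_ofReal_mul]
    field_simp
    ring
  have : 0 ≤ (1 / x) * ‖F.f' x - S.f' x‖ ^ 2 + (1 / x) * ‖S.f' x‖ ^ 2 + x * ‖S.f'' x‖ ^ 2 := by
    positivity
  linarith

lemma knots (n : ℕ) (r : ℕ → ℝ) (hmono : ∀ j, 1 ≤ j → j < n → r j < r (j + 1)) :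
    ∀ j, 1 ≤ j → j ≤ n → r 1 ≤ r j := by
  intro j hj
  induction j, hj using Nat.le_induction with
  | base => intro _; exact le_rfl
  | succ j hj ih => intro h; exact (ih (by omega)).trans (hmono j hj (by omega)).le

lemma knots' (n : ℕ) (r : ℕ → ℝ) (hmono : ∀ j, 1 ≤ j → j < n → r j < r (j + 1)) (i : ℕ)
    (hi : 1 ≤ i) : ∀ j, i ≤ j → j ≤ n → r i ≤ r j := by
  intro j hj
  induction j, hj using Nat.le_induction with
  | base => intro _; exact le_rfl
  | succ j hj ih => intro h; exact (ih (by omega)).trans (hmono j (by omega) (by omega)).le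

lemma knots_find (n : ℕ) (r : ℕ → ℝ) (x : ℝ) (hx : r 1 ≤ x) :
    ∀ m, 2 ≤ m → m ≤ n → x ≤ r m → ∃ j, 1 ≤ j ∧ j < n ∧ r j ≤ x ∧ x ≤ r (j + 1) := by
  intro m hm
  induction m, hm using Nat.le_induction with
  | base => intro h2 h; exact ⟨1, le_rfl, by omega, hx, h⟩
  | succ m hm ih =>
    intro h2 h
    rcases le_total x (r m) with h' | h'
    · exact ih (by omega) h'
    · exact ⟨m, by omega, by omega, h', h⟩

lemma ipc_zero (z : ℂ) : ipc z 0 = 0 := by simp [ipc]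

lemma mid_int (n : ℕ) (r : ℕ → ℝ) (hpos : 0 < r 1)
    (hmono : ∀ j, 1 ≤ j → j < n → r j < r (j + 1))
    (F S : Lambda0) (hS : IsBLSpline n r S.f)
    (hint : ∀ j, 1 ≤ j → j ≤ n → S.f (r j) = F.f (r j)) :
    ∀ j, 1 ≤ j → j ≤ n → ∫ x in (r 1)..(r j), wfn F S x = bfn F S (r j) - bfn F S (r 1) := by
  intro j hj
  induction j, hj using Nat.le_induction with
  | base => intro _; simp
  | succ j hj ih =>
    intro h
    have k1 := knots n r hmono j hj (by omega)
    have k2 := (hmono j hj (by omega)).le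
    obtain ⟨a, b, k, e, hf⟩ := hS.pieces j hj h
    have P := piece_int F S hS.smooth (hpos.trans_le k1) k2 a b k e hf
    rw [hint (j + 1) (by omega) h, hint j hj (by omega)] at P
    simp only [sub_self, ipc_zero] at P
    rw [← intervalIntegral.integral_add_adjacent_intervals (w_ii F S hS.smooth hpos k1)
      (w_ii F S hS.smooth (hpos.trans_le k1) k2), ih (by omega), P]
    ring

lemma b_le (F S : Lambda0) : ∃ C, 0 ≤ C ∧ ∀ x, 0 < x →
    |bfn F S x| ≤ ‖(x : ℂ) * deriv S.f' x‖ * (C + 2 * |Real.log x|) := by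
  obtain ⟨C1, h1, H1⟩ := growth F
  obtain ⟨C2, h2, H2⟩ := growth S
  refine ⟨C1 + C2, by positivity, fun x hx => ?_⟩
  refine (ipc_le _ _).trans ?_
  gcongr
  have := norm_sub_le (F.f' x) (S.f' x)
  linarith [H1 x hx, H2 x hx]

lemma b_zero (F S : Lambda0) {r1 : ℝ} (h1 : 0 < r1) (a b k : ℂ)
    (hf : ∀ x ∈ Ioo (0 : ℝ) r1,
      S.f x = a * (x : ℂ) ^ 2 + b * (x : ℂ) ^ 2 * (Real.log x : ℂ) + k) :
    Tendsto (bfn F S) (nhdsWithin 0 (Ioi 0)) (nhds 0) := by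
  obtain ⟨C, hC, H⟩ := b_le F S
  have hpf := piece_facts S (c := 0) (d := r1) le_rfl a b k 0 (by simpa using hf)
  have T1 : Tendsto (fun x : ℝ => Real.log x * x ^ ((1:ℝ)/2)) (nhdsWithin 0 (Ioi 0)) (nhds 0) :=
    tendsto_log_mul_rpow_nhdsGT_zero (by norm_num)
  have T0 : Tendsto (fun x : ℝ => x) (nhdsWithin 0 (Ioi 0)) (nhds 0) :=
    tendsto_nhdsWithin_of_tendsto_nhds tendsto_id
  have T3 : Tendsto (fun x : ℝ => Real.log x * x) (nhdsWithin 0 (Ioi 0)) (nhds 0) := by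
    have := tendsto_log_mul_rpow_nhdsGT_zero (r := 1) (by norm_num)
    simpa using this
  have T2 : Tendsto (fun x : ℝ => Real.log x ^ 2 * x) (nhdsWithin 0 (Ioi 0)) (nhds 0) := by
    have := T1.pow 2
    rw [zero_pow (by norm_num)] at this
    refine this.congr' ?_
    filter_upwards [self_mem_nhdsWithin] with x hx
    have hx : 0 < x := hx
    rw [mul_pow, ← Real.sqrt_eq_rpow, Real.sq_sqrt hx.le]
  set A := 2 * ‖a‖ + 3 * ‖b‖ with hA
  have T : Tendsto (fun x : ℝ => A * C * x + (2 * ‖b‖ * C + 2 * A) * |Real.log x * x|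
      + 4 * ‖b‖ * (Real.log x ^ 2 * x)) (nhdsWithin 0 (Ioi 0)) (nhds 0) := by
    have := ((T0.const_mul (A * C)).add (T3.abs.const_mul (2 * ‖b‖ * C + 2 * A))).add
      (T2.const_mul (4 * ‖b‖))
    simpa using this
  refine squeeze_zero_norm' ?_ T
  filter_upwards [Ioo_mem_nhdsGT h1] with x hx
  have x0 := hx.1
  rw [Real.norm_eq_abs]
  refine (H x x0).trans ?_
  have N : ‖(x : ℂ) * deriv S.f' x‖ ≤ A * x + 2 * ‖b‖ * (|Real.log x| * x) := by
    rw [(hpf x hx).1, zero_div, sub_zero]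
    have nx : ‖(x : ℂ)‖ = x := by simp [abs_of_pos x0]
    have nl : ‖(Real.log x : ℂ)‖ = |Real.log x| := by
      rw [Complex.norm_real, Real.norm_eq_abs]
    have := norm_add_le (2 * a * (x : ℂ)) (b * (2 * ((x : ℂ) * Real.log x) + 3 * x))
    have t2 := norm_add_le (2 * ((x : ℂ) * Real.log x)) (3 * (x : ℂ))
    simp only [norm_mul, nx, nl, Complex.norm_ofNat] at this t2
    have := mul_le_mul_of_nonneg_left t2 (norm_nonneg b)
    nlinarith
  refine (mul_le_mul_of_nonneg_right N (by positivity)).trans (le_of_eq ?_)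
  rw [abs_mul, abs_of_pos x0, ← sq_abs (Real.log x)]
  ring

lemma b_top (F S : Lambda0) {rn : ℝ} (h1 : 0 < rn) (k e : ℂ)
    (hf : ∀ x ∈ Ioi rn, S.f x = k + e * (Real.log x : ℂ)) :
    Tendsto (bfn F S) atTop (nhds 0) := by
  obtain ⟨C, hC, H⟩ := b_le F S
  have T1 : Tendsto (fun x : ℝ => Real.log x / x) atTop (nhds 0) := by
    have := Real.tendsto_pow_log_div_mul_add_atTop 1 0 1 one_ne_zero
    simpa using this
  have T0 : Tendsto (fun x : ℝ => x⁻¹) atTop (nhds 0) := tendsto_inv_atTop_zero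
  have T : Tendsto (fun x : ℝ => ‖e‖ * C * x⁻¹ + 2 * ‖e‖ * |Real.log x / x|) atTop (nhds 0) := by
    have := (T0.const_mul (‖e‖ * C)).add (T1.abs.const_mul (2 * ‖e‖))
    simpa using this
  refine squeeze_zero_norm' ?_ T
  filter_upwards [eventually_gt_atTop rn] with x hx
  have x0 := h1.trans hx
  rw [Real.norm_eq_abs]
  refine (H x x0).trans (le_of_eq ?_)
  have hpf := (piece_facts S (c := rn) (d := x + 1) h1.le 0 0 k e (by
    intro y hy; rw [hf y hy.1]; ring) x ⟨hx, by linarith⟩).1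
  rw [hpf, abs_div, abs_of_pos x0]
  simp [abs_of_pos x0]
  field_simp

lemma energy_bound (n : ℕ) (hn : 2 ≤ n) (r : ℕ → ℝ) (hpos : 0 < r 1)
    (hmono : ∀ j, 1 ≤ j → j < n → r j < r (j + 1))
    (F S : Lambda0) (hS : IsBLSpline n r S.f)
    (hint : ∀ j, 1 ≤ j → j ≤ n → S.f (r j) = F.f (r j))
    (hAB : Filter.Tendsto F.f (nhdsWithin 0 (Set.Ioi 0)) (nhds (S.f 0)) ∨
      NonSingularBLS (r 1) S.f) (j : ℕ) (hj : 1 ≤ j) (hjn : j < n) :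
    ∫ x in (r j)..(r (j + 1)), dfn F S x ≤ energySq F.f' F.f'' := by
  have k1 := knots n r hmono j hj hjn.le
  have k2 := hmono j hj hjn
  have k3 := knots' n r hmono (j + 1) (by omega) n (by omega) le_rfl
  have rnpos : 0 < r n := by linarith
  obtain ⟨kk, e, hright⟩ := hS.right
  obtain ⟨a, b, k, hleft, hlim⟩ : ∃ a b k : ℂ, (∀ x ∈ Ioo (0 : ℝ) (r 1),
      S.f x = a * (x : ℂ) ^ 2 + b * (x : ℂ) ^ 2 * (Real.log x : ℂ) + k) ∧
      Tendsto (fun x => ipc b (F.f x - S.f x)) (nhdsWithin 0 (Ioi 0)) (nhds 0) := by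
    rcases hAB with hA | ⟨a, c, hB⟩
    · obtain ⟨a, b, k, hl⟩ := hS.left
      refine ⟨a, b, k, hl, ?_⟩
      have t1 : Tendsto S.f (nhdsWithin 0 (Ioi 0)) (nhds (S.f 0)) :=
        hS.cont0.mono_left (nhdsWithin_mono _ Ioi_subset_Ici_self)
      have t2 := (hA.sub t1).norm.const_mul ‖b‖
      simp only [sub_self, norm_zero, mul_zero] at t2
      exact squeeze_zero_norm (fun x => ipc_le _ _) t2
    · refine ⟨a, 0, c, fun x hx => by rw [hB x hx]; ring, ?_⟩
      simp [ipc]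
  have T0 := (b_zero F S hpos a b k hleft)
  have T1 := b_top F S rnpos kk e hright
  have main : ∀ x ∈ Ioo 0 (r 1), ∀ y ∈ Ioi (r n), ∫ t in (r j)..(r (j + 1)), dfn F S t ≤
      energySq F.f' F.f'' - 2 * bfn F S y + (2 * bfn F S x - 8 * ipc b (F.f x - S.f x)) := by
    intro x hx y hy
    have hy : r n < y := hy
    have xy : x ≤ y := by linarith [hx.2]
    have W := w_ii F S hS.smooth hx.1 xy
    have dii : IntervalIntegrable (dfn F S) volume x y :=
      (efn_ii F hx.1 xy).sub (W.const_mul 2)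
    have s1 : ∫ t in (r j)..(r (j + 1)), dfn F S t ≤ ∫ t in x..y, dfn F S t := by
      refine intervalIntegral.integral_mono_interval (by linarith [hx.2]) k2.le (by linarith) ?_ dii
      filter_upwards [ae_restrict_of_ae (snd_ae S hx.1 xy), ae_restrict_mem measurableSet_Ioc]
        with t ht ht'
      have t0 : 0 < t := hx.1.trans ht'.1
      refine le_trans ?_ (d_ge F S t0 (ht ⟨ht'.1.le, ht'.2⟩))
      simp only [Pi.zero_apply]; positivity
    have s2 : ∫ t in x..y, dfn F S t = (∫ t in x..y, efn F t) - 2 * ∫ t in x..y, wfn F S t := by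
      rw [← intervalIntegral.integral_const_mul,
        ← intervalIntegral.integral_sub (efn_ii F hx.1 xy) (W.const_mul 2)]
      rfl
    have w1 := piece_int F S hS.smooth hx.1 hx.2.le a b k 0 (by
      intro t ht; rw [hleft t ⟨hx.1.trans ht.1, ht.2⟩]; ring)
    have w2 := mid_int n r hpos hmono F S hS hint n (by omega) le_rfl
    have w3 := piece_int F S hS.smooth rnpos hy.le 0 0 kk e (by
      intro t ht; rw [hright t ht.1]; ring)
    have z : ∀ w, ipc 0 w = 0 := by intro w; simp [ipc]
    rw [z] at w3
    rw [hint 1 le_rfl (by omega), sub_self] at w1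
    have z2 : ipc b (0 - (F.f x - S.f x)) = - ipc b (F.f x - S.f x) := by
      simp only [ipc, Complex.sub_re, Complex.sub_im, Complex.zero_re, Complex.zero_im]; ring
    rw [z2] at w1
    have r1n : r 1 ≤ r n := by linarith
    have i1 := w_ii F S hS.smooth hx.1 hx.2.le
    have i2 := w_ii F S hS.smooth hpos r1n
    have i3 := w_ii F S hS.smooth rnpos hy.le
    have s3 := intervalIntegral.integral_add_adjacent_intervals (i1.trans i2) i3
    rw [← intervalIntegral.integral_add_adjacent_intervals i1 i2, w1, w2, w3] at s3
    have s4 := efn_le F hx.1 xy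
    linarith
  have step : ∀ x ∈ Ioo 0 (r 1), ∫ t in (r j)..(r (j + 1)), dfn F S t ≤
      energySq F.f' F.f'' + (2 * bfn F S x - 8 * ipc b (F.f x - S.f x)) := by
    intro x hx
    have T := ((T1.const_mul 2).const_sub (energySq F.f' F.f'')).add_const
      (2 * bfn F S x - 8 * ipc b (F.f x - S.f x))
    simp only [mul_zero, sub_zero] at T
    refine ge_of_tendsto T ?_
    filter_upwards [eventually_gt_atTop (r n)] with y hy
    exact main x hx y hy
  have T := ((T0.const_mul 2).sub (hlim.const_mul 8)).const_add (energySq F.f' F.f'')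
  simp only [mul_zero, sub_zero, add_zero] at T
  refine ge_of_tendsto T ?_
  filter_upwards [Ioo_mem_nhdsGT hpos] with x hx
  exact step x hx

lemma var_bound (F S : Lambda0) (hS : ContDiffOn ℝ 2 S.f (Ioi 0)) {c d r1 h E : ℝ}
    (hr1 : 0 < r1) (hc : r1 ≤ c) (hcd : c < d) (hh : d - c ≤ h)
    (hE : ∫ x in c..d, dfn F S x ≤ E) :
    ∫ x in c..d, ‖F.f'' x - S.f'' x‖ ≤ Real.sqrt (h * (E / r1)) := by
  have c0 := hr1.trans_le hc
  set A := ∫ x in c..d, ‖F.f'' x - S.f'' x‖ with hA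
  have dii : IntervalIntegrable (dfn F S) volume c d :=
    (efn_ii F c0 hcd.le).sub ((w_ii F S hS c0 hcd.le).const_mul 2)
  have A0 : 0 ≤ A := intervalIntegral.integral_nonneg hcd.le (fun _ _ => norm_nonneg _)
  have E0 : 0 ≤ E := by
    refine le_trans ?_ hE
    refine intervalIntegral.integral_nonneg_of_ae_restrict hcd.le ?_
    filter_upwards [ae_restrict_of_ae (snd_ae S c0 hcd.le), ae_restrict_mem measurableSet_Icc]
        with t ht ht'
    have t0 : 0 < t := c0.trans_le ht'.1
    refine le_trans ?_ (d_ge F S t0 (ht ht'))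
    simp only [Pi.zero_apply]; positivity
  rcases A0.eq_or_lt with hA0 | hA0
  · rw [← hA0]; exact Real.sqrt_nonneg _
  apply Real.le_sqrt_of_sq_le
  have hpos : 0 < h := by linarith
  set l := A / h with hl
  have l0 : 0 < l := by positivity
  have step : A ≤ ∫ x in c..d, (l / 2 + (1 / (2 * l * r1)) * dfn F S x) := by
    refine intervalIntegral.integral_mono_ae_restrict hcd.le
      ((F.ii c0 hcd.le).sub (S.ii c0 hcd.le)).norm
      ((intervalIntegrable_const).add (dii.const_mul _)) ?_
    filter_upwards [ae_restrict_of_ae (snd_ae S c0 hcd.le), ae_restrict_mem measurableSet_Icc]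
        with t ht ht'
    have t0 : 0 < t := c0.trans_le ht'.1
    have D := d_ge F S t0 (ht ht')
    set g := ‖F.f'' t - S.f'' t‖ with hg
    have D' : r1 * g ^ 2 ≤ dfn F S t :=
      (mul_le_mul_of_nonneg_right (hc.trans ht'.1) (sq_nonneg _)).trans D
    calc g ≤ l / 2 + (1 / (2 * l * r1)) * (r1 * g ^ 2) := by
          have : l / 2 + (1 / (2 * l * r1)) * (r1 * g ^ 2) - g = (1 / (2 * l)) * (g - l) ^ 2 := by
            field_simp; ring
          have : 0 ≤ (1 / (2 * l)) * (g - l) ^ 2 := by positivity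
          linarith
      _ ≤ _ := by gcongr
  rw [intervalIntegral.integral_add intervalIntegrable_const (dii.const_mul _),
    intervalIntegral.integral_const_mul, intervalIntegral.integral_const, smul_eq_mul] at step
  have s2 : (1 / (2 * l * r1)) * (∫ x in c..d, dfn F S x) ≤ (1 / (2 * l * r1)) * E := by gcongr
  have s3 : (d - c) * (l / 2) ≤ h * (l / 2) := by gcongr
  have s4 : A ≤ h * (l / 2) + (1 / (2 * l * r1)) * E := by linarith
  have e1 : h * (l / 2) = A / 2 := by rw [hl]; field_simp
  have e2 : (1 / (2 * l * r1)) * E = (h * (E / r1)) / (2 * A) := by rw [hl]; field_simp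
  rw [e1, e2] at s4
  have s5 : A / 2 ≤ (h * (E / r1)) / (2 * A) := by linarith
  rw [le_div_iff₀ (by positivity)] at s5
  nlinarith

lemma deriv_bound (F S : Lambda0) {c d K : ℝ} (c0 : 0 < c) (hcd : c < d)
    (hK : ∫ x in c..d, ‖F.f'' x - S.f'' x‖ ≤ K)
    (zc : S.f c = F.f c) (zd : S.f d = F.f d) :
    ∀ x ∈ Icc c d, ‖F.f' x - S.f' x‖ ≤ K := by
  intro x hx
  have hsub := Icc_sub_pos c0 hcd.le
  have gii := (F.ii c0 hcd.le).sub (S.ii c0 hcd.le)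
  have osc : ∀ s ∈ Icc c d, ∀ t ∈ Icc c d, s ≤ t →
      ‖(F.f' t - S.f' t) - (F.f' s - S.f' s)‖ ≤ K := by
    intro s hs t ht hst
    have s0 := c0.trans_le hs.1
    have : (F.f' t - S.f' t) - (F.f' s - S.f' s) = ∫ y in s..t, (F.f'' y - S.f'' y) := by
      rw [intervalIntegral.integral_sub (F.ii s0 hst) (S.ii s0 hst),
        (F.locAC s t s0 hst).2 t ⟨hst, le_rfl⟩, (S.locAC s t s0 hst).2 t ⟨hst, le_rfl⟩]
      ring
    rw [this]
    refine (intervalIntegral.norm_integral_le_integral_norm hst).trans (le_trans ?_ hK)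
    refine intervalIntegral.integral_mono_interval hs.1 hst ht.2 ?_ gii.norm
    exact Eventually.of_forall (fun _ => norm_nonneg _)
  have osc' : ∀ s ∈ Icc c d, ‖(F.f' x - S.f' x) - (F.f' s - S.f' s)‖ ≤ K := by
    intro s hs
    rcases le_total s x with h | h
    · exact osc s hs x hx h
    · rw [norm_sub_rev]; exact osc x hx s hs h
  have cg : ContinuousOn (fun x => F.f' x - S.f' x) (uIcc c d) :=
    (F.contDeriv.mono hsub).sub (S.contDeriv.mono hsub)
  have I0 : ∫ s in c..d, (F.f' s - S.f' s) = 0 := by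
    rw [intervalIntegral.integral_eq_sub_of_hasDerivAt (f := fun x => F.f x - S.f x)
      (fun y hy => (F.hasDeriv y (hsub hy)).sub (S.hasDeriv y (hsub hy))) cg.intervalIntegrable,
      zc, zd]
    simp
  have I1 : ∫ s in c..d, ((F.f' x - S.f' x) - (F.f' s - S.f' s)) = (d - c) • (F.f' x - S.f' x) := by
    rw [intervalIntegral.integral_sub intervalIntegrable_const cg.intervalIntegrable, I0,
      intervalIntegral.integral_const, sub_zero]
  have I2 := intervalIntegral.norm_integral_le_of_norm_le_const (a := c) (b := d) (C := K)
    (f := fun s => (F.f' x - S.f' x) - (F.f' s - S.f' s)) (by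
      intro s hs
      rw [uIoc_of_le hcd.le] at hs
      exact osc' s ⟨hs.1.le, hs.2⟩)
  have dc : 0 < d - c := by linarith
  rw [I1, norm_smul, Real.norm_eq_abs, abs_of_pos dc, mul_comm K] at I2
  exact le_of_mul_le_mul_left I2 dc

lemma value_bound (F S : Lambda0) {c d K : ℝ} (c0 : 0 < c) (hcd : c < d)
    (hK : ∀ x ∈ Icc c d, ‖F.f' x - S.f' x‖ ≤ K)
    (zc : S.f c = F.f c) (zd : S.f d = F.f d) :
    ∀ x ∈ Icc c d, ‖F.f x - S.f x‖ ≤ (d - c) / 2 * K := by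
  intro x hx
  have hD : ∀ y ∈ Icc c d, HasDerivWithinAt (fun y => F.f y - S.f y) (F.f' y - S.f' y)
      (Icc c d) y := fun y hy =>
    ((F.hasDeriv y (c0.trans_le hy.1)).sub (S.hasDeriv y (c0.trans_le hy.1))).hasDerivWithinAt
  have K0 : 0 ≤ K := (norm_nonneg _).trans (hK x hx)
  have M := fun a ha => (convex_Icc c d).norm_image_sub_le_of_norm_hasDerivWithin_le hD hK
    (x := a) (y := x) ha hx
  have M1 := M c ⟨le_rfl, hcd.le⟩
  have M2 := M d ⟨hcd.le, le_rfl⟩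
  simp only [zc, zd, sub_self, sub_zero, Real.norm_eq_abs] at M1 M2
  rw [abs_of_nonneg (by linarith [hx.1])] at M1
  rw [abs_of_nonpos (by linarith [hx.2])] at M2
  nlinarith

/-- `L∞` error bound: for `l ∈ {0,1}`,
`‖f^{(l)} − σ^{(l)}‖_{L∞[r₁,r_n]} ≤ (1/(2^{1−l}·√r₁))·h^{3/2−l}·‖f‖₀`,
where `h` is the maximal gap between consecutive knots and `σ` is either of the
Beppo Levi `L₀`-spline interpolants `σ^A`, `σ^B` of `f ∈ Λ₀`. -/
theorem stmt11 (n : ℕ) (hn : 2 ≤ n) (r : ℕ → ℝ) (hpos : 0 < r 1)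
    (hmono : ∀ j, 1 ≤ j → j < n → r j < r (j + 1))
    (h : ℝ) (hh : IsGreatest {d : ℝ | ∃ j, 1 ≤ j ∧ j < n ∧ d = r (j + 1) - r j} h)
    (F S : Lambda0) (hS : IsBLSpline n r S.f)
    (hint : ∀ j, 1 ≤ j → j ≤ n → S.f (r j) = F.f (r j))
    (hAB : Filter.Tendsto F.f (nhdsWithin 0 (Set.Ioi 0)) (nhds (S.f 0)) ∨
      NonSingularBLS (r 1) S.f) :
    (∀ x ∈ Set.Icc (r 1) (r n),
      ‖F.f x - S.f x‖ ≤ 1 / (2 * Real.sqrt (r 1)) * h ^ ((3:ℝ)/2) * F.seminorm0) ∧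
    (∀ x ∈ Set.Icc (r 1) (r n),
      ‖F.f' x - S.f' x‖ ≤ 1 / Real.sqrt (r 1) * h ^ ((1:ℝ)/2) * F.seminorm0) := by
  have E0 : 0 ≤ energySq F.f' F.f'' := by
    refine le_trans ?_ (efn_le F one_pos le_rfl); simp
  have hpos' : 0 < h := by
    obtain ⟨j, h1, h2, h3⟩ := hh.1
    linarith [hmono j h1 h2]
  have main : ∀ x ∈ Set.Icc (r 1) (r n),
      ‖F.f x - S.f x‖ ≤ h / 2 * Real.sqrt (h * (energySq F.f' F.f'' / r 1)) ∧
      ‖F.f' x - S.f' x‖ ≤ Real.sqrt (h * (energySq F.f' F.f'' / r 1)) := by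
    intro x hx
    obtain ⟨j, hj, hjn, x1, x2⟩ := knots_find n r x hx.1 n hn le_rfl hx.2
    have k1 := knots n r hmono j hj hjn.le
    have k2 := hmono j hj hjn
    have c0 := hpos.trans_le k1
    have hgap : r (j + 1) - r j ≤ h := hh.2 ⟨j, hj, hjn, rfl⟩
    have e := energy_bound n hn r hpos hmono F S hS hint hAB j hj hjn
    have v := var_bound F S hS.smooth hpos k1 k2 hgap e
    have dB := deriv_bound F S c0 k2 v (hint j hj hjn.le) (hint (j + 1) (by omega) (by omega))
    have vB := value_bound F S c0 k2 dB (hint j hj hjn.le) (hint (j + 1) (by omega) (by omega))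
    refine ⟨(vB x ⟨x1, x2⟩).trans ?_, dB x ⟨x1, x2⟩⟩
    gcongr
  have s1 : Real.sqrt (h * (energySq F.f' F.f'' / r 1))
      = 1 / Real.sqrt (r 1) * h ^ ((1:ℝ)/2) * F.seminorm0 := by
    rw [Real.sqrt_mul hpos'.le, Real.sqrt_div E0, ← Real.sqrt_eq_rpow, Lambda0.seminorm0]
    ring
  have s2 : h / 2 * Real.sqrt (h * (energySq F.f' F.f'' / r 1))
      = 1 / (2 * Real.sqrt (r 1)) * h ^ ((3:ℝ)/2) * F.seminorm0 := by
    have : h ^ ((3:ℝ)/2) = h * h ^ ((1:ℝ)/2) := by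
      rw [show (3:ℝ)/2 = 1 + 1/2 by norm_num, Real.rpow_add hpos', Real.rpow_one]
    rw [s1, this]
    have := (Real.sqrt_pos.2 hpos).ne'
    field_simp
  exact ⟨fun x hx => s2 ▸ (main x hx).1, fun x hx => s1 ▸ (main x hx).2⟩
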